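/- If x, z ∈ σᵢ(D), dᵢ(x,z) < r(x), and z' ∈ σⱼ⁻¹(z) for some j ∈ I, then there exists x' ∈ σⱼ⁻¹(x) such that d[l^{(j)}](x', z') = dᵢ(x, z). -/

import Mathlib

noncomputable section

open Set
open scoped ENNReal

/-- The Euclidean plane `ℝ²` with the Euclidean metric. -/
abbrev E2 : Type := EuclideanSpace ℝ (Fin 2)

/-- Vertices of the fixed closed regular (equilateral) triangle of side length 1. -/
def p0 : E2 := !₂[0, 0]
def p1 : E2 := !₂[1, 0]
def p2 : E2 := !₂[1 / 2, Real.sqrt 3 / 2]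

/-- `Dtri` is the fixed closed regular triangle in `ℝ²` with edge length 1. -/
def Dtri : Set E2 := convexHull ℝ {p0, p1, p2}

/-- `V0` is the set of the three vertices of `Dtri`. -/
def V0 : Set E2 := {p0, p1, p2}

/-- The three closed edges of `Dtri`. -/
def e01 : Set E2 := segment ℝ p0 p1
def e12 : Set E2 := segment ℝ p1 p2
def e02 : Set E2 := segment ℝ p0 p2

/-- `E0` is the set of the three closed edges of `Dtri`. -/
def E0 : Set (Set E2) := {e01, e12, e02}

/-- The open edge `e° = e ∖ V₀`. -/
def eo (e : Set E2) : Set E2 := e \ V0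

/-- `Do = D°` is the interior of `Dtri` in `ℝ²`. -/
def Do : Set E2 := interior Dtri

/-- `l : E₀ → ℝ` is positive and satisfies the strict triangle inequalities:
`l e₁ + l e₂ > l e₃` whenever `{e₁, e₂, e₃} = E₀`. -/
def TriIneq (l : Set E2 → ℝ) : Prop :=
  (∀ e ∈ E0, 0 < l e) ∧
  ∀ e₁ e₂ e₃ : Set E2, ({e₁, e₂, e₃} : Set (Set E2)) = E0 → l e₁ + l e₂ > l e₃

/-- A linear map `f : ℝ² → ℝ²` realizes the edge lengths `l`, i.e. for each `e ∈ E₀`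
the segment `f(e)` has Euclidean length `l e`. -/
def Realizes (f : E2 →ₗ[ℝ] E2) (l : Set E2 → ℝ) : Prop :=
  dist (f p0) (f p1) = l e01 ∧ dist (f p1) (f p2) = l e12 ∧ dist (f p0) (f p2) = l e02

/-- The metric `d[l]` on `Dtri`, defined by `d[l](x,y) = |f x - f y|₂` for a linear map `f`
realizing the edge lengths `l` (this is independent of the choice of `f`). -/
def dD (l : Set E2 → ℝ) (x y : E2) : ℝ :=
  letI := Classical.propDecidable (∃ f : E2 →ₗ[ℝ] E2, Realizes f l)
  if h : ∃ f : E2 →ₗ[ℝ] E2, Realizes f l then dist (h.choose x) (h.choose y) else 0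

/-- A triangulation `T = (σᵢ)_{i ∈ I}`, `I = Fin n`, of a topological space `S`:
a finite family of continuous maps `σᵢ : Dtri → S` such that
(a) `σᵢ` is injective on each open edge, (b) `σᵢ` is injective on `D°`,
(c) `S` is the disjoint union of `⋃ᵢ σᵢ(V₀)`, the sets `σᵢ(D°)`, and the distinct sets
among the `σᵢ(e°)`, and (d) glued edges are identified by a linear homeomorphism. -/
structure Triangulation (S : Type) [TopologicalSpace S] (n : ℕ) where
  σ : Fin n → E2 → S
  continuousOn : ∀ i, ContinuousOn (σ i) Dtri
  inj_edge : ∀ i, ∀ e ∈ E0, InjOn (σ i) (eo e)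
  inj_int : ∀ i, InjOn (σ i) Do
  cover : (⋃ i, σ i '' V0) ∪ (⋃ i, σ i '' Do) ∪ (⋃ i, ⋃ e ∈ E0, σ i '' eo e) = univ
  disj_int : ∀ i j, i ≠ j → Disjoint (σ i '' Do) (σ j '' Do)
  disj_vert_int : ∀ j, Disjoint (⋃ i, σ i '' V0) (σ j '' Do)
  disj_vert_edge : ∀ j, ∀ e ∈ E0, Disjoint (⋃ i, σ i '' V0) (σ j '' eo e)
  disj_int_edge : ∀ i j, ∀ e ∈ E0, Disjoint (σ i '' Do) (σ j '' eo e)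
  edge_eq_or_disjoint : ∀ i j, ∀ e ∈ E0, ∀ e' ∈ E0,
    σ i '' eo e = σ j '' eo e' ∨ Disjoint (σ i '' eo e) (σ j '' eo e')
  glue : ∀ i j, ∀ e ∈ E0, ∀ e' ∈ E0, σ i '' eo e = σ j '' eo e' →
    ∃ A : E2 →ᵃ[ℝ] E2, A '' e = e' ∧ ∀ x ∈ e, σ j (A x) = σ i x

variable {S : Type} [TopologicalSpace S] {n : ℕ}

/-- `l ∈ ℝ^{E(T)}_Δ`: `l` assigns positive lengths to the edges of `T` satisfying the
strict triangle inequalities in each triangle. -/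
def TriIneqT (T : Triangulation S n) (l : Set S → ℝ) : Prop :=
  (∀ (i : Fin n), ∀ e ∈ E0, 0 < l (T.σ i '' e)) ∧
  ∀ (i : Fin n), ∀ e₁ e₂ e₃ : Set E2, ({e₁, e₂, e₃} : Set (Set E2)) = E0 →
    l (T.σ i '' e₁) + l (T.σ i '' e₂) > l (T.σ i '' e₃)

/-- The restricted edge lengths `l^{(i)}` on the triangle `σᵢ(D)`: `l^{(i)}_e = l_{σᵢ(e)}`. -/
def lRes (T : Triangulation S n) (l : Set S → ℝ) (i : Fin n) : Set E2 → ℝ :=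
  fun e => l (T.σ i '' e)

/-- `dᵢ(x,y) = min { d[l^{(i)}](x',y') : x' ∈ σᵢ⁻¹(x), y' ∈ σᵢ⁻¹(y) }` for `x, y ∈ σᵢ(D)`. -/
def dTri (T : Triangulation S n) (l : Set S → ℝ) (i : Fin n) (x y : S) : ℝ :=
  sInf { r | ∃ x' ∈ Dtri, ∃ y' ∈ Dtri,
    T.σ i x' = x ∧ T.σ i y' = y ∧ r = dD (lRes T l i) x' y' }

/-- The set of sums `Σ_j d_{i_j}(x_{j-1}, x_j)` over chains from `x` to `y`. -/
def chainSums (T : Triangulation S n) (l : Set S → ℝ) (x y : S) : Set ℝ :=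
  { r | ∃ (k : ℕ) (c : ℕ → S) (idx : ℕ → Fin n),
      c 0 = x ∧ c k = y ∧
      (∀ j < k, c j ∈ T.σ (idx j) '' Dtri ∧ c (j + 1) ∈ T.σ (idx j) '' Dtri) ∧
      r = ∑ j ∈ Finset.range k, dTri T l (idx j) (c j) (c (j + 1)) }

/-- The glued metric `d[l]` on `S`. -/
def dGlue (T : Triangulation S n) (l : Set S → ℝ) (x y : S) : ℝ :=
  sInf (chainSums T l x y)

/-- `K(x)`: the union of the edges of `Dtri` not containing `x`. -/
def Kset (x : E2) : Set E2 := ⋃₀ {e ∈ E0 | x ∉ e}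

/-- The distance from `x` to `K(x)` in `(Dtri, d[l'])`. -/
def rObs (l' : Set E2 → ℝ) (x : E2) : ℝ := sInf { r | ∃ y ∈ Kset x, r = dD l' x y }

/-- `r(x) = min { rᵢ(x') : i ∈ I, x' ∈ σᵢ⁻¹(x) }` for `x ∈ S`. -/
def rS (T : Triangulation S n) (l : Set S → ℝ) (x : S) : ℝ :=
  sInf { r | ∃ i : Fin n, ∃ x' ∈ Dtri, T.σ i x' = x ∧ r = rObs (lRes T l i) x' }

/-!
Choose preimages `x₀`, `z₀` of `x`, `z` in the `i`-th triangle realizing `dᵢ(x, z)`; they exist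
because the fibres of `σᵢ` are finite. By the definition of `r`, every edge through `z₀` also
contains `x₀`. If `z₀` is a vertex, this forces `x₀ = z₀`, so that `x = z`. If `z₀` is an interior
point, it is the only preimage of `z` in the whole triangulation. If `z₀` lies on an open edge, then
so does `z'`, and the gluing map between the two edges is affine and preserves the common edge
length, hence is an isometry; it sends `z₀` to `z'` and `x₀` to the required point `x'`.
-/

section Segments

variable {E F G : Type*} [AddCommGroup E] [Module ℝ E] [SeminormedAddCommGroup F]
  [NormedSpace ℝ F] [SeminormedAddCommGroup G] [NormedSpace ℝ G]

theorem diam_segment (a b : F) : Metric.diam (segment ℝ a b) = dist a b := by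
  rw [← convexHull_pair, convexHull_diam, Metric.diam_pair]

theorem diam_image_segment (f : E →ᵃ[ℝ] F) (a b : E) :
    Metric.diam (f '' segment ℝ a b) = dist (f a) (f b) := by
  rw [image_segment, diam_segment]

theorem dist_map_eq_dist_map_of_mem_segment {f : E →ᵃ[ℝ] F} {g : E →ᵃ[ℝ] G} {a b x y : E}
    (h : dist (f a) (f b) = dist (g a) (g b)) (hx : x ∈ segment ℝ a b)
    (hy : y ∈ segment ℝ a b) : dist (f x) (f y) = dist (g x) (g y) := by
  rw [segment_eq_image_lineMap] at hx hy
  obtain ⟨s, -, rfl⟩ := hx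
  obtain ⟨t, -, rfl⟩ := hy
  simp only [AffineMap.apply_lineMap, dist_lineMap_lineMap, h]

end Segments

section AffineBasis

theorem exists_linearMap_sub_eq {ι 𝕜 E F : Type*} [CommRing 𝕜] [AddCommGroup E] [Module 𝕜 E]
    [AddCommGroup F] [Module 𝕜 F] (b : AffineBasis ι 𝕜 E) (q : ι → F) :
    ∃ f : E →ₗ[𝕜] F, ∀ i j, f (b i) - f (b j) = q i - q j := by
  obtain ⟨o⟩ := b.nonempty
  let f : E →ₗ[𝕜] F := (b.basisOf o).constr 𝕜 fun i => q i - q o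
  have hf (i : ι) : f (b i) - f (b o) = q i - q o := by
    rcases eq_or_ne i o with rfl | hi
    · simp only [sub_self]
    · rw [← map_sub, ← vsub_eq_sub, ← b.basisOf_apply o ⟨i, hi⟩, Module.Basis.constr_basis]
  exact ⟨f, fun i j => by rw [← sub_sub_sub_cancel_right _ _ (f (b o)), hf, hf,
    sub_sub_sub_cancel_right]⟩

theorem eq_of_coord_eq_zero {ι 𝕜 E : Type*} [Finite ι] [Ring 𝕜] [AddCommGroup E] [Module 𝕜 E]
    {b : AffineBasis ι 𝕜 E} {i : ι} {x : E} (h : ∀ k, k ≠ i → b.coord k x = 0) :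
    x = b i := by
  cases nonempty_fintype ι
  rw [← b.linear_combination_coord_eq_self x,
    Fintype.sum_eq_single i fun k hk => by rw [h k hk, zero_smul],
    ← Fintype.sum_eq_single (f := fun k => b.coord k x) i h, b.sum_coord_apply_eq_one, one_smul]

variable {ι 𝕜 E : Type*} [Field 𝕜] [LinearOrder 𝕜] [IsStrictOrderedRing 𝕜] [AddCommGroup E]
  [Module 𝕜 E] {b : AffineBasis ι 𝕜 E} {i j k : ι} {x : E}

theorem coord_eq_zero_of_mem_segment (hx : x ∈ segment 𝕜 (b i) (b j)) (hi : k ≠ i)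
    (hj : k ≠ j) : b.coord k x = 0 := by
  rw [segment_eq_image_lineMap] at hx
  obtain ⟨t, -, rfl⟩ := hx
  rw [AffineMap.apply_lineMap, b.coord_apply_ne hi, b.coord_apply_ne hj,
    AffineMap.lineMap_same_apply]

theorem mem_segment_of_coord_eq_zero [Finite ι] (hij : i ≠ j)
    (hx : x ∈ convexHull 𝕜 (range b)) (h : ∀ k, k ≠ i → k ≠ j → b.coord k x = 0) :
    x ∈ segment 𝕜 (b i) (b j) := by
  cases nonempty_fintype ι
  rw [b.convexHull_eq_nonneg_coord] at hx
  refine ⟨b.coord i x, b.coord j x, hx i, hx j, ?_, ?_⟩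
  · rw [← b.sum_coord_apply_eq_one x]
    exact (Fintype.sum_eq_add i j hij fun k hk => h k hk.1 hk.2).symm
  · conv_rhs => rw [← b.linear_combination_coord_eq_self x]
    exact (Fintype.sum_eq_add (f := fun k => b.coord k x • b k) i j hij
      fun k hk => by rw [h k hk.1 hk.2, zero_smul]).symm

theorem exists_coord_eq_zero_of_notMem_interior {ι E : Type*} [Finite ι]
    [NormedAddCommGroup E] [NormedSpace ℝ E] {b : AffineBasis ι ℝ E} {x : E}
    (hx : x ∈ convexHull ℝ (range b)) (hx' : x ∉ interior (convexHull ℝ (range b))) :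
    ∃ k, b.coord k x = 0 := by
  rw [b.interior_convexHull] at hx'
  rw [b.convexHull_eq_nonneg_coord] at hx
  obtain ⟨k, hk⟩ := not_forall.mp hx'
  exact ⟨k, le_antisymm (not_lt.mp hk) (hx k)⟩

end AffineBasis

section Triangle

theorem affineIndependent_vertices : AffineIndependent ℝ ![p0, p1, p2] := by
  rw [affineIndependent_iff_of_fintype]
  intro w hw hsum
  rw [Finset.univ.weightedVSub_eq_linear_combination hw] at hsum
  have hw₁₂ : w 1 + w 2 * (1 / 2) = 0 := by
    simpa [Fin.sum_univ_three, p0, p1, p2] using congrArg (· 0) hsum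
  have hw₂ : w 2 = 0 := by
    simpa [Fin.sum_univ_three, p0, p1, p2] using congrArg (· 1) hsum
  rw [Fin.sum_univ_three] at hw
  have hw₁ : w 1 = 0 := by linarith
  have hw₀ : w 0 = 0 := by linarith
  intro i
  fin_cases i
  exacts [hw₀, hw₁, hw₂]

/-- The vertices of `Dtri` as an affine basis of the plane; its coordinate functions are the
barycentric coordinates. -/
def triBasis : AffineBasis (Fin 3) ℝ E2 where
  toFun := ![p0, p1, p2]
  ind' := affineIndependent_vertices
  tot' := affineIndependent_vertices.affineSpan_eq_top_iff_card_eq_finrank_add_one.mpr (by simp)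

theorem range_triBasis : range triBasis = V0 := by
  change range ![p0, p1, p2] = V0
  simp only [Matrix.range_cons, Matrix.range_empty, union_empty, V0, insert_eq]

theorem Dtri_eq_convexHull_range : Dtri = convexHull ℝ (range triBasis) := by
  rw [range_triBasis, Dtri, V0]

theorem mem_E0_iff {e : Set E2} :
    e ∈ E0 ↔ ∃ i j, i ≠ j ∧ e = segment ℝ (triBasis i) (triBasis j) := by
  constructor
  · rintro (rfl | rfl | rfl)
    exacts [⟨0, 1, by decide, rfl⟩, ⟨1, 2, by decide, rfl⟩, ⟨0, 2, by decide, rfl⟩]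
  · rintro ⟨i, j, hij, rfl⟩
    wlog h : i < j generalizing i j
    · rw [segment_symm]
      exact this j i hij.symm (hij.lt_or_gt.resolve_left h)
    fin_cases i <;> fin_cases j <;> first | exact absurd h (by decide) | skip
    exacts [.inl rfl, .inr (.inr rfl), .inr (.inl rfl)]

theorem subset_Dtri_of_mem_E0 {e : Set E2} (he : e ∈ E0) : e ⊆ Dtri := by
  obtain ⟨i, j, -, rfl⟩ := mem_E0_iff.mp he
  rw [Dtri_eq_convexHull_range]
  exact segment_subset_convexHull (mem_range_self i) (mem_range_self j)

theorem mem_V0_or_mem_Do_or_mem_eo {x : E2} (hx : x ∈ Dtri) :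
    x ∈ V0 ∨ x ∈ Do ∨ ∃ e ∈ E0, x ∈ eo e := by
  by_contra! ⟨hV, hD, hE⟩
  rw [Do, Dtri_eq_convexHull_range] at hD
  rw [Dtri_eq_convexHull_range] at hx
  obtain ⟨k, hk⟩ := exists_coord_eq_zero_of_notMem_interior hx hD
  obtain ⟨i, j, hij, hijk⟩ : ∃ i j, i ≠ j ∧ ∀ m, m ≠ i → m ≠ j → m = k :=
    (by decide : ∀ k : Fin 3, ∃ i j, i ≠ j ∧ ∀ m, m ≠ i → m ≠ j → m = k) k
  have hx_edge : x ∈ segment ℝ (triBasis i) (triBasis j) :=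
    mem_segment_of_coord_eq_zero hij hx fun m hi hj => hijk m hi hj ▸ hk
  exact hE _ (mem_E0_iff.mpr ⟨i, j, hij, rfl⟩) ⟨hx_edge, hV⟩

theorem eq_of_mem_V0_of_forall_mem_edge {v x : E2} (hv : v ∈ V0)
    (h : ∀ e ∈ E0, v ∈ e → x ∈ e) : x = v := by
  rw [← range_triBasis] at hv
  obtain ⟨i, rfl⟩ := hv
  refine eq_of_coord_eq_zero fun k hk => ?_
  obtain ⟨j, hji, hjk⟩ : ∃ j, j ≠ i ∧ j ≠ k :=
    (by decide : ∀ i k : Fin 3, ∃ j, j ≠ i ∧ j ≠ k) i k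
  have hx : x ∈ segment ℝ (triBasis i) (triBasis j) :=
    h _ (mem_E0_iff.mpr ⟨i, j, hji.symm, rfl⟩) (left_mem_segment ℝ _ _)
  exact coord_eq_zero_of_mem_segment hx hk hjk.symm

end Triangle

section EdgeLengths

variable {l l' : Set E2 → ℝ} {f : E2 →ₗ[ℝ] E2} {e : Set E2} {x y : E2}

theorem Realizes.diam_image (hf : Realizes f l) (he : e ∈ E0) :
    Metric.diam (f '' e) = l e := by
  obtain ⟨h01, h12, h02⟩ := hf
  rcases he with rfl | rfl | rfl
  exacts [(diam_image_segment f.toAffineMap p0 p1).trans h01,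
    (diam_image_segment f.toAffineMap p1 p2).trans h12,
    (diam_image_segment f.toAffineMap p0 p2).trans h02]

theorem dist_eq_of_sq_add_sq_eq {u v : E2} {r : ℝ} (hr : 0 ≤ r)
    (h : (u 0 - v 0) ^ 2 + (u 1 - v 1) ^ 2 = r ^ 2) : dist u v = r := by
  rw [EuclideanSpace.dist_eq, Fin.sum_univ_two, Real.dist_eq, Real.dist_eq, sq_abs, sq_abs, h,
    Real.sqrt_sq hr]

theorem exists_dist_eq_of_triangle_le {a b c : ℝ} (ha : 0 < a) (habc : a ≤ b + c)
    (hbac : b ≤ a + c) (hcab : c ≤ a + b) :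
    ∃ u v w : E2, dist u v = a ∧ dist v w = b ∧ dist u w = c := by
  obtain ⟨p, hp⟩ : ∃ p, 2 * a * p = a ^ 2 + c ^ 2 - b ^ 2 :=
    ⟨(a ^ 2 + c ^ 2 - b ^ 2) / (2 * a), by field_simp⟩
  have hpc : p ^ 2 ≤ c ^ 2 := by
    have hlower : 0 ≤ 2 * a * (p + c) := by nlinarith
    have hupper : 0 ≤ 2 * a * (c - p) := by nlinarith
    refine sq_le_sq' ?_ ?_
    · linarith [nonneg_of_mul_nonneg_right hlower (by positivity)]
    · linarith [nonneg_of_mul_nonneg_right hupper (by positivity)]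
  have hq : √(c ^ 2 - p ^ 2) ^ 2 = c ^ 2 - p ^ 2 := Real.sq_sqrt (sub_nonneg.mpr hpc)
  refine ⟨!₂[0, 0], !₂[a, 0], !₂[p, √(c ^ 2 - p ^ 2)], dist_eq_of_sq_add_sq_eq ha.le ?_,
    dist_eq_of_sq_add_sq_eq (by linarith) ?_, dist_eq_of_sq_add_sq_eq (by linarith) ?_⟩
  · change (0 - a) ^ 2 + (0 - 0) ^ 2 = a ^ 2
    ring
  · change (a - p) ^ 2 + (0 - √(c ^ 2 - p ^ 2)) ^ 2 = b ^ 2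
    linarith
  · change (0 - p) ^ 2 + (0 - √(c ^ 2 - p ^ 2)) ^ 2 = c ^ 2
    linarith

theorem TriIneq.exists_realizes (hl : TriIneq l) : ∃ f, Realizes f l := by
  obtain ⟨hpos, htri⟩ := hl
  obtain ⟨u, v, w, huv, hvw, huw⟩ := exists_dist_eq_of_triangle_le (hpos e01 (by simp [E0]))
    (htri e12 e02 e01 (by rw [E0, insert_comm e01, pair_comm e01])).le
    (htri e01 e02 e12 (by rw [E0, pair_comm e02])).le
    (htri e01 e12 e02 rfl).le
  obtain ⟨f, hf⟩ := exists_linearMap_sub_eq triBasis ![u, v, w]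
  have hdist (i j : Fin 3) :
      dist (f (triBasis i)) (f (triBasis j)) = dist (![u, v, w] i) (![u, v, w] j) := by
    rw [dist_eq_norm, dist_eq_norm, hf]
  exact ⟨f, (hdist 0 1).trans huv, (hdist 1 2).trans hvw, (hdist 0 2).trans huw⟩

theorem exists_realizes_and_dD_eq_dist (hl : ∃ f, Realizes f l) :
    ∃ f, Realizes f l ∧ ∀ x y, dD l x y = dist (f x) (f y) :=
  ⟨hl.choose, hl.choose_spec, fun x y => by rw [dD, dif_pos hl]⟩

theorem dD_nonneg : 0 ≤ dD l x y := by
  unfold dD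
  split
  exacts [dist_nonneg, le_rfl]

theorem dD_self : dD l x x = 0 := by
  unfold dD
  split
  exacts [dist_self _, rfl]

theorem rObs_nonneg : 0 ≤ rObs l x :=
  Real.sInf_nonneg fun _ ⟨_, _, hr⟩ => hr ▸ dD_nonneg

theorem rObs_le_dD (hy : y ∈ Kset x) : rObs l x ≤ dD l x y :=
  csInf_le ⟨0, fun _ ⟨_, _, hr⟩ => hr ▸ dD_nonneg⟩ ⟨y, hy, rfl⟩

theorem mem_edge_of_dD_lt_rObs (h : dD l x y < rObs l x) (he : e ∈ E0) (hy : y ∈ e) : x ∈ e := by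
  by_contra hx
  exact h.not_ge (rObs_le_dD ⟨e, ⟨he, hx⟩, hy⟩)

theorem dD_map_eq (hl : ∃ f, Realizes f l) (hl' : ∃ f, Realizes f l') {A : E2 →ᵃ[ℝ] E2}
    (he : e ∈ E0) (hAe : A '' e ∈ E0) (hlen : l' (A '' e) = l e) (hx : x ∈ e) (hy : y ∈ e) :
    dD l' (A x) (A y) = dD l x y := by
  obtain ⟨f, hf, hdf⟩ := exists_realizes_and_dD_eq_dist hl
  obtain ⟨g, hg, hdg⟩ := exists_realizes_and_dD_eq_dist hl'
  have hdiam : Metric.diam (g.toAffineMap.comp A '' e) = Metric.diam (f.toAffineMap '' e) := by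
    rw [AffineMap.coe_comp, image_comp]
    exact (hg.diam_image hAe).trans (hlen.trans (hf.diam_image he).symm)
  obtain ⟨i, j, -, rfl⟩ := mem_E0_iff.mp he
  rw [diam_image_segment, diam_image_segment] at hdiam
  rw [hdf, hdg]
  exact dist_map_eq_dist_map_of_mem_segment hdiam hx hy

end EdgeLengths

namespace Triangulation

variable (T : Triangulation S n) (l : Set S → ℝ) {i j : Fin n} {x z : S} {x' z' w : E2} {e : Set E2}

theorem finite_fiber (i : Fin n) (x : S) : {x' ∈ Dtri | T.σ i x' = x}.Finite := by
  have hV : (V0 ∩ {x' | T.σ i x' = x}).Finite := (toFinite {p0, p1, p2}).inter_of_left _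
  have hD : (Do ∩ {x' | T.σ i x' = x}).Finite :=
    Subsingleton.finite fun a ha b hb => T.inj_int i ha.1 hb.1 (ha.2.trans hb.2.symm)
  have hE : (⋃ e ∈ E0, eo e ∩ {x' | T.σ i x' = x}).Finite :=
    (toFinite {e01, e12, e02}).biUnion fun e he => Subsingleton.finite fun a ha b hb =>
      T.inj_edge i e he ha.1 hb.1 (ha.2.trans hb.2.symm)
  refine ((hV.union hD).union hE).subset fun x' ⟨hx'D, hx'⟩ => ?_
  rcases mem_V0_or_mem_Do_or_mem_eo hx'D with h | h | ⟨e, he, h⟩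
  exacts [.inl (.inl ⟨h, hx'⟩), .inl (.inr ⟨h, hx'⟩), .inr (mem_biUnion he ⟨h, hx'⟩)]

theorem exists_dTri_eq_dD (hx : x ∈ T.σ i '' Dtri) (hz : z ∈ T.σ i '' Dtri) :
    ∃ x' ∈ Dtri, ∃ z' ∈ Dtri,
      T.σ i x' = x ∧ T.σ i z' = z ∧ dTri T l i x z = dD (lRes T l i) x' z' := by
  have hfin : {r | ∃ x' ∈ Dtri, ∃ z' ∈ Dtri,
      T.σ i x' = x ∧ T.σ i z' = z ∧ r = dD (lRes T l i) x' z'}.Finite := by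
    refine ((T.finite_fiber i x).image2 (dD (lRes T l i)) (T.finite_fiber i z)).subset ?_
    rintro r ⟨x', hx'D, z', hz'D, hx', hz', rfl⟩
    exact mem_image2_of_mem ⟨hx'D, hx'⟩ ⟨hz'D, hz'⟩
  obtain ⟨x', hx'D, hx'⟩ := hx
  obtain ⟨z', hz'D, hz'⟩ := hz
  exact hfin.isCompact.sInf_mem ⟨_, x', hx'D, z', hz'D, hx', hz', rfl⟩

theorem rS_le_rObs (hx'D : x' ∈ Dtri) : rS T l (T.σ i x') ≤ rObs (lRes T l i) x' :=
  csInf_le ⟨0, fun _ ⟨_, _, _, _, hr⟩ => hr ▸ rObs_nonneg⟩ ⟨i, x', hx'D, rfl, rfl⟩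

theorem eq_of_mem_Do (hw : w ∈ Do) (hz'D : z' ∈ Dtri) (h : T.σ i w = T.σ j z') :
    i = j ∧ w = z' := by
  have hwi : T.σ j z' ∈ T.σ i '' Do := ⟨w, hw, h⟩
  rcases mem_V0_or_mem_Do_or_mem_eo hz'D with hV | hD | ⟨e, he, hE⟩
  · exact absurd hwi (disjoint_left.mp (T.disj_vert_int i) (mem_iUnion.mpr ⟨j, z', hV, rfl⟩))
  · obtain rfl : i = j := by
      by_contra hij
      exact disjoint_left.mp (T.disj_int i j hij) hwi ⟨z', hD, rfl⟩
    exact ⟨rfl, T.inj_int i hw hD h⟩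
  · exact absurd ⟨z', hE, rfl⟩ (disjoint_left.mp (T.disj_int_edge i j e he) hwi)

theorem exists_mem_eo_of_mem_eo (he : e ∈ E0) (hw : w ∈ eo e) (hz'D : z' ∈ Dtri)
    (h : T.σ i w = T.σ j z') : ∃ e' ∈ E0, z' ∈ eo e' ∧ T.σ i '' eo e = T.σ j '' eo e' := by
  have hwi : T.σ j z' ∈ T.σ i '' eo e := ⟨w, hw, h⟩
  rcases mem_V0_or_mem_Do_or_mem_eo hz'D with hV | hD | ⟨e', he', hE⟩
  · exact absurd hwi
      (disjoint_left.mp (T.disj_vert_edge i e he) (mem_iUnion.mpr ⟨j, z', hV, rfl⟩))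
  · exact absurd hwi (disjoint_left.mp (T.disj_int_edge j i e he) ⟨z', hD, rfl⟩)
  · exact ⟨e', he', hE, (T.edge_eq_or_disjoint i j e he e' he').resolve_right
      fun hdisj => disjoint_left.mp hdisj hwi ⟨z', hE, rfl⟩⟩

theorem exists_gluing_map (he : e ∈ E0) (hw : w ∈ eo e) (hz'D : z' ∈ Dtri)
    (h : T.σ i w = T.σ j z') :
    ∃ A : E2 →ᵃ[ℝ] E2, A '' e ∈ E0 ∧ EqOn (T.σ j ∘ A) (T.σ i) e ∧ A w = z' := by
  obtain ⟨e', he', hz'e', heq⟩ := T.exists_mem_eo_of_mem_eo he hw hz'D h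
  obtain ⟨A, rfl, hσA⟩ := T.glue i j e he e' he' heq
  have hσAw : T.σ j (A w) = T.σ j z' := (hσA w hw.1).trans h
  have hAw : A w ∈ eo (A '' e) := ⟨mem_image_of_mem A hw.1, fun hV =>
    disjoint_left.mp (T.disj_vert_edge i e he) (mem_iUnion.mpr ⟨j, A w, hV, hσAw⟩) ⟨w, hw, h⟩⟩
  exact ⟨A, he', hσA, T.inj_edge j _ he' hAw hz'e' hσAw⟩

theorem lRes_image_eq {A : E2 →ᵃ[ℝ] E2} (h : EqOn (T.σ j ∘ A) (T.σ i) e) :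
    lRes T l j (A '' e) = lRes T l i e := by
  rw [lRes, lRes, ← image_comp, h.image_eq]

end Triangulation

theorem exists_preimage_realizing_dTri_general (T : Triangulation S n) {l : Set S → ℝ}
    (hl : ∀ i, ∃ f, Realizes f (lRes T l i)) {i j : Fin n} {x z : S}
    (hx : x ∈ T.σ i '' Dtri) (hz : z ∈ T.σ i '' Dtri) (hlt : dTri T l i x z < rS T l x)
    {z' : E2} (hz'D : z' ∈ Dtri) (hz' : T.σ j z' = z) :
    ∃ x' ∈ Dtri, T.σ j x' = x ∧ dD (lRes T l j) x' z' = dTri T l i x z := by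
  obtain ⟨x₀, hx₀D, z₀, hz₀D, rfl, hz₀, hd⟩ := T.exists_dTri_eq_dD l hx hz
  rw [hd] at hlt ⊢
  have hedge : ∀ e ∈ E0, z₀ ∈ e → x₀ ∈ e := fun e =>
    mem_edge_of_dD_lt_rObs (hlt.trans_le (T.rS_le_rObs l hx₀D))
  have hσ : T.σ i z₀ = T.σ j z' := hz₀.trans hz'.symm
  rcases mem_V0_or_mem_Do_or_mem_eo hz₀D with hV | hD | ⟨e, he, hE⟩
  · obtain rfl : x₀ = z₀ := eq_of_mem_V0_of_forall_mem_edge hV hedge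
    exact ⟨z', hz'D, hσ.symm, by rw [dD_self, dD_self]⟩
  · obtain ⟨rfl, rfl⟩ := T.eq_of_mem_Do hD hz'D hσ
    exact ⟨x₀, hx₀D, rfl, rfl⟩
  · obtain ⟨A, hAe, hσA, rfl⟩ := T.exists_gluing_map he hE hz'D hσ
    have hx₀e : x₀ ∈ e := hedge e he hE.1
    exact ⟨A x₀, subset_Dtri_of_mem_E0 hAe (mem_image_of_mem A hx₀e), hσA hx₀e,
      dD_map_eq (hl i) (hl j) he hAe (T.lRes_image_eq l hσA) hx₀e hE.1⟩

/-- Lemma 3.2: if `x, z ∈ σᵢ(D)`, `dᵢ(x,z) < r(x)`, and `z' ∈ σⱼ⁻¹(z)`,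
then there exists `x' ∈ σⱼ⁻¹(x)` with `d[l^{(j)}](x', z') = dᵢ(x, z)`. -/
theorem exists_preimage_realizing_dTri
    {S : Type} [TopologicalSpace S] [CompactSpace S] [T2Space S] [ConnectedSpace S]
    {n : ℕ} (T : Triangulation S n) (l : Set S → ℝ) (hl : TriIneqT T l)
    (i j : Fin n) (x z : S)
    (hx : x ∈ T.σ i '' Dtri) (hz : z ∈ T.σ i '' Dtri)
    (hlt : dTri T l i x z < rS T l x)
    (z' : E2) (hz'D : z' ∈ Dtri) (hz' : T.σ j z' = z) :
    ∃ x' ∈ Dtri, T.σ j x' = x ∧ dD (lRes T l j) x' z' = dTri T l i x z :=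
  exists_preimage_realizing_dTri_general T (fun k => TriIneq.exists_realizes ⟨hl.1 k, hl.2 k⟩)
    hx hz hlt hz'D hz'
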